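/- Let L be a real symmetric n×n matrix with eigendecomposition L = U Λ Uᵀ, where U is orthogonal, let ĝ₀, …, ĝ_J : ℝ → ℝ be spectral kernels, and define the filter operators G_j = U ĝ_j(Λ) Uᵀ for j = 0, …, J. Suppose there are constants 0 < A ≤ B such that A ≤ Σ_{j=0}^{J} ĝ_j(λᵢ)² ≤ B for every eigenvalue λᵢ of L (i = 1, …, n). Then for every x ∈ ℝⁿ, A‖x‖² ≤ Σ_{j=0}^{J} ‖G_j x‖² ≤ B‖x‖²; i.e., the collection of scaling and wavelet operators forms a frame, so the graph wavelet transform x ↦ (G₀ x, …, G_J x) is injective and hence invertible on its image. -/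

import Mathlib

open Matrix

/-! The frame operator `∑ⱼ Gⱼᴴ Gⱼ` is again a spectral filter, with symbol `∑ⱼ |ĝⱼ|²`. Filters
depend monotonically on their symbol and a constant symbol `c` gives `c • 1`, so bounds on the
symbol are bounds on the frame operator, whose quadratic form is `∑ⱼ ‖Gⱼ x‖²`. Here `‖x‖²` is
written `star x ⬝ᵥ x`, which treats real and complex scalars at once. -/

section AnalysisOperator

variable {ι κ m R : Type*} [Fintype ι] [Fintype κ] [Fintype m]

theorem sum_star_mulVec_dotProduct_mulVec [Semiring R] [StarRing R] (T : κ → Matrix m ι R)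
    (x : ι → R) :
    ∑ j, star (T j *ᵥ x) ⬝ᵥ (T j *ᵥ x) = star x ⬝ᵥ ((∑ j, (T j)ᴴ * T j) *ᵥ x) := by
  simp only [sum_mulVec, dotProduct_sum, star_mulVec, ← mulVec_mulVec, dotProduct_mulVec]

theorem injective_mulVec_of_lower_frame_bound [CommRing R] [IsDomain R] [StarRing R]
    [PartialOrder R] [StarOrderedRing R] {T : κ → Matrix m ι R} {A : R} (hA : 0 < A)
    (hT : ∀ x, A * (star x ⬝ᵥ x) ≤ ∑ j, star (T j *ᵥ x) ⬝ᵥ (T j *ᵥ x)) :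
    Function.Injective fun x j => T j *ᵥ x := by
  refine (injective_iff_map_eq_zero (LinearMap.pi fun j => (T j).mulVecLin)).mpr fun x hx => ?_
  have hTx (j : κ) : T j *ᵥ x = 0 := congrFun hx j
  by_contra hx0
  have hpos : 0 < A * (star x ⬝ᵥ x) := smul_pos hA (dotProduct_star_self_pos_iff.mpr hx0)
  exact hpos.not_ge (by simpa only [hTx, dotProduct_zero, Finset.sum_const_zero] using hT x)

end AnalysisOperator

section SpectralFilter

variable {ι κ R : Type*} [Fintype ι] [DecidableEq ι] [CommRing R] [StarRing R]

/-- The filter `U * diagonal d * Uᴴ` with spectral symbol `d`, acting in the basis of the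
columns of `U`.
For `L = U Λ Uᴴ` the filter `ĝ(L)` has symbol `d i = ĝ (λᵢ)`; arbitrary symbols are allowed, so `d`
may take different values on equal eigenvalues. -/
def spectralFilter (U : unitaryGroup ι R) (d : ι → R) : Matrix ι ι R :=
  Unitary.conjStarAlgAut R (Matrix ι ι R) U (diagonal d)

theorem conjTranspose_spectralFilter_mul_self (U : unitaryGroup ι R) (d : ι → R) :
    (spectralFilter U d)ᴴ * spectralFilter U d = spectralFilter U (star d * d) := by
  simp only [spectralFilter, ← star_eq_conjTranspose, ← map_star, ← map_mul]
  rw [star_eq_conjTranspose, diagonal_conjTranspose, diagonal_mul_diagonal', Pi.mul_def]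

theorem spectralFilter_sub (U : unitaryGroup ι R) (d e : ι → R) :
    spectralFilter U (d - e) = spectralFilter U d - spectralFilter U e := by
  simp only [spectralFilter, ← map_sub, diagonal_sub, Pi.sub_def]

theorem spectralFilter_sum (U : unitaryGroup ι R) (s : Finset κ) (d : κ → ι → R) :
    spectralFilter U (∑ j ∈ s, d j) = ∑ j ∈ s, spectralFilter U (d j) := by
  simp only [spectralFilter, ← map_sum]
  exact congrArg _ (map_sum (diagonalAddMonoidHom ι R) d s)

theorem spectralFilter_const (U : unitaryGroup ι R) (c : R) :
    spectralFilter U (Function.const ι c) = c • 1 := by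
  have hdiag : diagonal (Function.const ι c) = c • 1 := (smul_one_eq_diagonal c).symm
  simp only [spectralFilter, hdiag, map_smul, map_one]

theorem sum_star_spectralFilter_dotProduct [Fintype κ] (U : unitaryGroup ι R) (d : κ → ι → R)
    (x : ι → R) :
    ∑ j, star (spectralFilter U (d j) *ᵥ x) ⬝ᵥ (spectralFilter U (d j) *ᵥ x) =
      star x ⬝ᵥ (spectralFilter U (∑ j, star (d j) * d j) *ᵥ x) := by
  simp only [sum_star_mulVec_dotProduct_mulVec, conjTranspose_spectralFilter_mul_self,
    spectralFilter_sum]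

theorem dotProduct_spectralFilter_const (U : unitaryGroup ι R) (c : R) (x : ι → R) :
    star x ⬝ᵥ (spectralFilter U (Function.const ι c) *ᵥ x) = c * (star x ⬝ᵥ x) := by
  rw [spectralFilter_const, smul_mulVec, one_mulVec, dotProduct_smul, smul_eq_mul]

variable [PartialOrder R] [StarOrderedRing R]

theorem posSemidef_spectralFilter (U : unitaryGroup ι R) {d : ι → R} (hd : 0 ≤ d) :
    (spectralFilter U d).PosSemidef :=
  (PosSemidef.diagonal hd).mul_mul_conjTranspose_same (U : Matrix ι ι R)

theorem dotProduct_spectralFilter_mono (U : unitaryGroup ι R) {d e : ι → R} (hde : d ≤ e)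
    (x : ι → R) :
    star x ⬝ᵥ (spectralFilter U d *ᵥ x) ≤ star x ⬝ᵥ (spectralFilter U e *ᵥ x) := by
  have h := (posSemidef_spectralFilter U (sub_nonneg.mpr hde)).dotProduct_mulVec_nonneg x
  rwa [spectralFilter_sub, sub_mulVec, dotProduct_sub, sub_nonneg] at h

theorem spectralFilter_lower_frame_bound [Fintype κ] (U : unitaryGroup ι R) {d : κ → ι → R} {A : R}
    (hd : ∀ i, A ≤ ∑ j, star (d j i) * d j i) (x : ι → R) :
    A * (star x ⬝ᵥ x)
      ≤ ∑ j, star (spectralFilter U (d j) *ᵥ x) ⬝ᵥ (spectralFilter U (d j) *ᵥ x) := by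
  have hsymbol : Function.const ι A ≤ ∑ j, star (d j) * d j := fun i => by
    simpa using hd i
  rw [sum_star_spectralFilter_dotProduct, ← dotProduct_spectralFilter_const U]
  exact dotProduct_spectralFilter_mono U hsymbol x

theorem spectralFilter_upper_frame_bound [Fintype κ] (U : unitaryGroup ι R) {d : κ → ι → R} {B : R}
    (hd : ∀ i, ∑ j, star (d j i) * d j i ≤ B) (x : ι → R) :
    ∑ j, star (spectralFilter U (d j) *ᵥ x) ⬝ᵥ (spectralFilter U (d j) *ᵥ x)
      ≤ B * (star x ⬝ᵥ x) := by
  have hsymbol : ∑ j, star (d j) * d j ≤ Function.const ι B := fun i => by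
    simpa using hd i
  rw [sum_star_spectralFilter_dotProduct, ← dotProduct_spectralFilter_const U]
  exact dotProduct_spectralFilter_mono U hsymbol x

end SpectralFilter

theorem graph_wavelet_frame_general {ι κ R : Type*} [Fintype ι] [DecidableEq ι] [Fintype κ]
    [CommRing R] [IsDomain R] [StarRing R] [PartialOrder R] [StarOrderedRing R]
    (U : unitaryGroup ι R) (d : κ → ι → R) {A B : R} (hA : 0 < A)
    (hlower : ∀ i, A ≤ ∑ j, star (d j i) * d j i)
    (hupper : ∀ i, ∑ j, star (d j i) * d j i ≤ B) :
    (∀ x : ι → R,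
        A * (star x ⬝ᵥ x)
            ≤ ∑ j, star (spectralFilter U (d j) *ᵥ x) ⬝ᵥ (spectralFilter U (d j) *ᵥ x)
        ∧ ∑ j, star (spectralFilter U (d j) *ᵥ x) ⬝ᵥ (spectralFilter U (d j) *ᵥ x)
            ≤ B * (star x ⬝ᵥ x))
      ∧ Function.Injective fun (x : ι → R) (j : κ) => spectralFilter U (d j) *ᵥ x :=
  ⟨fun x => ⟨spectralFilter_lower_frame_bound U hlower x,
      spectralFilter_upper_frame_bound U hupper x⟩,
    injective_mulVec_of_lower_frame_bound hA (spectralFilter_lower_frame_bound U hlower)⟩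

/-- **Frame property of the graph wavelet transform.** If the spectral kernels
`ĝ₀, …, ĝ_J` satisfy `A ≤ Σⱼ ĝⱼ(λᵢ)² ≤ B` on every eigenvalue of `L = U Λ Uᵀ`
(with `0 < A ≤ B`), then the filter operators `Gⱼ = U ĝⱼ(Λ) Uᵀ` form a frame:
`A ‖x‖² ≤ Σⱼ ‖Gⱼ x‖² ≤ B ‖x‖²` for every `x ∈ ℝⁿ` (Euclidean norm), and hence the
graph wavelet transform `x ↦ (G₀ x, …, G_J x)` is injective. -/
theorem graph_wavelet_frame {n J : ℕ} (L U : Matrix (Fin n) (Fin n) ℝ)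
    (lam : Fin n → ℝ)
    (hsymm : L.IsSymm)
    (hU : U * Uᵀ = 1) (hU' : Uᵀ * U = 1)
    (hdec : L = U * Matrix.diagonal lam * Uᵀ)
    (g : ℕ → ℝ → ℝ)
    (Gop : ℕ → Matrix (Fin n) (Fin n) ℝ)
    (hG : ∀ j, Gop j = U * Matrix.diagonal (fun i => g j (lam i)) * Uᵀ)
    (A B : ℝ) (hA : 0 < A) (hAB : A ≤ B)
    (hlower : ∀ i : Fin n, A ≤ ∑ j ∈ Finset.range (J + 1), (g j (lam i)) ^ 2)
    (hupper : ∀ i : Fin n, ∑ j ∈ Finset.range (J + 1), (g j (lam i)) ^ 2 ≤ B) :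
    (∀ x : Fin n → ℝ,
        A * (∑ i, x i ^ 2)
            ≤ ∑ j ∈ Finset.range (J + 1), ∑ i, ((Gop j *ᵥ x) i) ^ 2
        ∧ ∑ j ∈ Finset.range (J + 1), ∑ i, ((Gop j *ᵥ x) i) ^ 2
            ≤ B * (∑ i, x i ^ 2))
      ∧ Function.Injective (fun x : Fin n → ℝ => fun j : Fin (J + 1) => Gop j *ᵥ x) := by
  obtain rfl : Gop = fun j => spectralFilter ⟨U, hU', hU⟩ fun i => g j (lam i) := funext hG
  simpa [Finset.sum_range, dotProduct, sq] using
    graph_wavelet_frame_general ⟨U, hU', hU⟩ (fun (j : Fin (J + 1)) i => g j (lam i)) hA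
      (by simpa [Finset.sum_range, sq] using hlower) (by simpa [Finset.sum_range, sq] using hupper)
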